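/- For every positive integer n that is not of the form T(k)+1 for a triangular number T(k) = k(k+1)/2, one has C₃(n) = D₃(n)/3, i.e., 3·C₃(n) = D₃(n). -/

import Mathlib

/-- `Cm m n`: number of partitions of `n` whose largest part is divisible by `m`,
say `m*j`, with all parts `≤ j` occurring fewer than `m` times; `Cm m 0 = 1`. -/
noncomputable def Cm (m n : ℕ) : ℕ :=
  if n = 0 then 1 else
  Nat.card {s : Multiset ℕ // s.sum = n ∧ (∀ a ∈ s, 0 < a) ∧
    ∃ j : ℕ, m * j ∈ s ∧ (∀ b ∈ s, b ≤ m * j) ∧ ∀ b ∈ s, b ≤ j → s.count b < m}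

/-- `Dm m n`: number of partitions of `n` into nonnegative parts (0 allowed) whose
smallest part occurs exactly `m` times and every other part occurs fewer than `m` times. -/
noncomputable def Dm (m n : ℕ) : ℕ :=
  Nat.card {s : Multiset ℕ // s.sum = n ∧
    ∃ a ∈ s, s.count a = m ∧ (∀ b ∈ s, a ≤ b) ∧ ∀ b ∈ s, b ≠ a → s.count b < m}

/-!
Modulo `q ^ L` the infinite products below are finite. Let
`F x = ∑ₐ q^(ma) (q^(m(a+1)); q^m)_∞ / (x q^(a+1); q)_∞`. Splitting off the `m` copies of the
smallest part `a` shows that `F 1 = ∑ Dₘ(n) qⁿ`. Expanding `1 / (x q^(a+1); q)_∞` in powers of `x`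
by Euler's identity and then summing over `a` by the same identity makes the coefficient of `x^r` a
product; for `r = mj` it enumerates the partitions with largest part `mj` counted by `Cₘ`. Hence the
average of `F` over the `m`-th roots of unity is `∑ Cₘ(n) qⁿ`.

For `m = 3` and a primitive cube root of unity `w`, the factorization
`1 - y³ = (1 - y) (1 - w y) (1 - w² y)` turns `F w` into
`∑ₐ q^(3a) (q^(a+1); q)_∞ (w² q^(a+1); q)_∞`. Telescoping evaluates this sum as `1` plus a multiple
of the partial theta function `∑ₖ (-w² q)^k q^(k(k-1)/2)`, so `F w` and `F w²` contribute only at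
the exponents `0` and `k (k + 1) / 2 + 1`.
-/

open Finset

section QSeries

variable {R : Type*} [CommRing R] {q : R} {L : ℕ}

/-- The finite `q`-Pochhammer symbol `(a; q)_n`. When `q ^ L = 0`, the factors of `(a; q)_∞` from
the `L`-th on are `1`, so `(a; q)_L` stands for `(a; q)_∞`. -/
def qPochhammer (a q : R) (n : ℕ) : R :=
  ∏ i ∈ range n, (1 - a * q ^ i)

theorem qPochhammer_zero_left (q : R) (n : ℕ) : qPochhammer 0 q n = 1 := by
  simp [qPochhammer]

theorem qPochhammer_one_left (hq : q ^ L = 0) : qPochhammer 1 q L = 0 := by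
  cases L with
  | zero => simpa [qPochhammer] using hq
  | succ L => simp [qPochhammer, prod_range_succ']

theorem qPochhammer_add (a q : R) (m n : ℕ) :
    qPochhammer a q (m + n) = qPochhammer a q m * qPochhammer (a * q ^ m) q n := by
  simp only [qPochhammer, prod_range_add, pow_add, mul_assoc]

theorem qPochhammer_eq_mul_shift (hq : q ^ L = 0) (a : R) (n : ℕ) :
    qPochhammer a q L = qPochhammer a q n * qPochhammer (a * q ^ n) q L := by
  rw [← qPochhammer_add, add_comm, qPochhammer_add, hq, mul_zero, qPochhammer_zero_left, mul_one]

theorem qPochhammer_eq_one_sub_mul (hq : q ^ L = 0) (a : R) :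
    qPochhammer a q L = (1 - a) * qPochhammer (a * q) q L := by
  simpa [qPochhammer] using qPochhammer_eq_mul_shift hq a 1

/-- The inverse `1 / (q; q)_n`, for `q ^ L = 0`: each `1 / (1 - q ^ (i + 1))` is its geometric
series cut off after `L` terms. -/
def invQFactorial (q : R) (L n : ℕ) : R :=
  ∏ i ∈ range n, ∑ k ∈ range L, (q ^ (i + 1)) ^ k

theorem one_sub_pow_mul_geom_sum (hq : q ^ L = 0) (i : ℕ) :
    (1 - q ^ (i + 1)) * ∑ k ∈ range L, (q ^ (i + 1)) ^ k = 1 := by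
  rw [mul_neg_geom_sum, pow_right_comm, hq, zero_pow i.succ_ne_zero, sub_zero]

theorem one_sub_pow_mul_invQFactorial_succ (hq : q ^ L = 0) (n : ℕ) :
    (1 - q ^ (n + 1)) * invQFactorial q L (n + 1) = invQFactorial q L n := by
  rw [invQFactorial, prod_range_succ, mul_left_comm, one_sub_pow_mul_geom_sum hq, mul_one,
    invQFactorial]

theorem qPochhammer_self_mul_invQFactorial (hq : q ^ L = 0) (n : ℕ) :
    qPochhammer q q n * invQFactorial q L n = 1 := by
  rw [qPochhammer, invQFactorial, ← prod_mul_distrib]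
  exact prod_eq_one fun i _ => by rw [← pow_succ', one_sub_pow_mul_geom_sum hq]

theorem qPochhammer_tail_eq (hq : q ^ L = 0) (n : ℕ) :
    qPochhammer (q ^ (n + 1)) q L = qPochhammer q q L * invQFactorial q L n := by
  rw [qPochhammer_eq_mul_shift hq q n, mul_right_comm, qPochhammer_self_mul_invQFactorial hq,
    one_mul, pow_succ']

/-- Euler's `q`-exponential series `∑ yᵃ / (q; q)ₐ`, cut off after `L` terms. -/
def qExp (q y : R) (L : ℕ) : R :=
  ∑ a ∈ range L, y ^ a * invQFactorial q L a

theorem qExp_mul_base (hq : q ^ L = 0) {y : R} (hy : y ^ L = 0) :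
    qExp q (y * q) L = (1 - y) * qExp q y L := by
  let f (a : ℕ) : R := y ^ a * (1 - q ^ a) * invQFactorial q L a
  have shift : ∑ a ∈ range L, f (a + 1) = ∑ a ∈ range L, f a := by
    have h := (sum_range_succ' f L).symm.trans (sum_range_succ f L)
    simpa [f, hy] using h
  have difference : qExp q y L - qExp q (y * q) L = ∑ a ∈ range L, f a := by
    rw [qExp, qExp, ← sum_sub_distrib]
    exact sum_congr rfl fun a _ => by rw [mul_pow]; ring
  have scaled : y * qExp q y L = ∑ a ∈ range L, f (a + 1) := by
    rw [qExp, mul_sum]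
    refine sum_congr rfl fun a _ => ?_
    simp only [f]
    rw [mul_assoc (y ^ (a + 1)), one_sub_pow_mul_invQFactorial_succ hq, pow_succ', mul_assoc]
  linear_combination scaled + shift - difference

theorem qExp_mul_qPochhammer (hq : q ^ L = 0) {y : R} (hy : y ^ L = 0) :
    qExp q y L * qPochhammer y q L = 1 := by
  nontriviality R
  have hL : L ≠ 0 := by rintro rfl; simp at hq
  have invariant (i : ℕ) : qExp q y L * qPochhammer y q L =
      qExp q (y * q ^ i) L * qPochhammer (y * q ^ i) q L := by
    induction i with
    | zero => simp
    | succ i ih =>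
      have hyi : (y * q ^ i) ^ L = 0 := by rw [mul_pow, hy, zero_mul]
      rw [ih, qPochhammer_eq_one_sub_mul hq, pow_succ, ← mul_assoc y, qExp_mul_base hq hyi]
      ring
  have at_zero : qExp q (0 : R) L = 1 := by
    rw [qExp, sum_eq_single_of_mem 0 (mem_range.2 (Nat.pos_of_ne_zero hL))]
    · simp [invQFactorial]
    · intro a _ ha
      rw [zero_pow ha, zero_mul]
  rw [invariant L, hq, mul_zero, at_zero, qPochhammer_zero_left, one_mul]

/-- The series `∑ₐ q^(ma) (q^(m(a+1)); q^m)_∞ / (x q^(a+1); q)_∞`, cut off for `q ^ L = 0`. Its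
value at `x = 1` enumerates the partitions counted by `Dm m`, and averaging it over the `m`-th
roots of unity `x` gives those counted by `Cm m`. -/
def interpolatingSeries (m : ℕ) (q x : R) (L : ℕ) : R :=
  ∑ a ∈ range L, q ^ (m * a) *
    (qPochhammer (q ^ (m * (a + 1))) (q ^ m) L * qExp q (x * q ^ (a + 1)) L)

theorem interpolatingSeries_eq_sum {m : ℕ} (hqm : (q ^ m) ^ L = 0) (x : R) :
    interpolatingSeries m q x L = ∑ r ∈ range L, x ^ r * (q ^ r * (invQFactorial q L r *
      (qPochhammer (q ^ m) (q ^ m) L * qExp (q ^ m) (q ^ (m + r)) L))) := by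
  simp only [interpolatingSeries, pow_mul q m (_ + 1), qPochhammer_tail_eq hqm, qExp, mul_sum]
  rw [sum_comm]
  exact sum_congr rfl fun r _ => sum_congr rfl fun a _ => by ring

theorem interpolatingSeries_eq_of_forall_mul (hq : q ^ L = 0) {m : ℕ} {x : R} {g : ℕ → R}
    (hg : ∀ a, g a * qPochhammer (x * q ^ (a + 1)) q L =
      qPochhammer (q ^ (m * (a + 1))) (q ^ m) L) :
    interpolatingSeries m q x L = ∑ a ∈ range L, q ^ (m * a) * g a := by
  refine sum_congr rfl fun a _ => ?_
  have hy : (x * q ^ (a + 1)) ^ L = 0 := by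
    rw [mul_pow, pow_right_comm, hq, zero_pow a.succ_ne_zero, mul_zero]
  rw [← hg, mul_assoc (g a), mul_comm (qPochhammer _ q L), qExp_mul_qPochhammer hq hy, mul_one]

theorem interpolatingSeries_one (hq : q ^ L = 0) (m : ℕ) :
    interpolatingSeries m q 1 L =
      ∑ a ∈ range L, q ^ (m * a) * ∏ i ∈ range L, ∑ k ∈ range m, (q ^ (a + 1 + i)) ^ k := by
  refine interpolatingSeries_eq_of_forall_mul hq fun a => ?_
  rw [qPochhammer, qPochhammer, ← prod_mul_distrib]
  refine prod_congr rfl fun i _ => ?_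
  rw [one_mul, ← pow_add, mul_comm, mul_neg_geom_sum]
  ring

theorem qPochhammer_self_mul_qExp (hq : q ^ L = 0) (j : ℕ) :
    qPochhammer q q L * qExp q (q ^ (j + 1)) L = qPochhammer q q j := by
  have hy : (q ^ (j + 1)) ^ L = 0 := by rw [pow_right_comm, hq, zero_pow j.succ_ne_zero]
  rw [qPochhammer_eq_mul_shift hq q j, ← pow_succ', mul_assoc, mul_comm _ (qExp _ _ _),
    qExp_mul_qPochhammer hq hy, mul_one]

theorem sum_interpolatingSeries_pow (hq : q ^ L = 0) {m : ℕ} (hm : 0 < m) {ζ : R}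
    (hζ : ζ ^ m = 1) (hsum : ∀ r, ¬ m ∣ r → ∑ t ∈ range m, (ζ ^ t) ^ r = 0) :
    ∑ t ∈ range m, interpolatingSeries m q (ζ ^ t) L =
      m * ∑ j ∈ range L, q ^ (m * j) *
        (qPochhammer (q ^ m) (q ^ m) j * invQFactorial q L (m * j)) := by
  have hqm : (q ^ m) ^ L = 0 := by rw [pow_right_comm, hq, zero_pow hm.ne']
  have hsum_mul (j : ℕ) : ∑ t ∈ range m, (ζ ^ t) ^ (m * j) = m := by
    simp [pow_mul, pow_right_comm ζ _ m, hζ]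
  let f (r : ℕ) : R := q ^ r * (invQFactorial q L r *
    (qPochhammer (q ^ m) (q ^ m) L * qExp (q ^ m) (q ^ (m + r)) L))
  have f_mul (j : ℕ) : f (m * j) =
      q ^ (m * j) * (qPochhammer (q ^ m) (q ^ m) j * invQFactorial q L (m * j)) := by
    simp only [f]
    rw [show m + m * j = m * (j + 1) by ring, pow_mul q m (j + 1), qPochhammer_self_mul_qExp hqm]
    ring
  calc ∑ t ∈ range m, interpolatingSeries m q (ζ ^ t) L
      = ∑ r ∈ range L, (∑ t ∈ range m, (ζ ^ t) ^ r) * f r := by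
        simp only [interpolatingSeries_eq_sum hqm, sum_mul]
        exact sum_comm
    _ = ∑ r ∈ range (m * L), (∑ t ∈ range m, (ζ ^ t) ^ r) * f r := by
        refine sum_subset (range_subset_range.2 (Nat.le_mul_of_pos_left L hm)) fun r _ hr => ?_
        simp [f, pow_eq_zero_of_le (not_lt.1 (mem_range.not.1 hr)) hq]
    _ = ∑ j ∈ range L, m * f (m * j) := by
        refine (sum_of_injOn (m * ·) (fun _ _ _ _ h => Nat.eq_of_mul_eq_mul_left hm h)
          (fun j hj => by simpa [hm] using hj) (fun r hr hr' => ?_) fun j _ => ?_).symm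
        · rw [hsum, zero_mul]
          rintro ⟨j, rfl⟩
          exact hr' ⟨j, by simpa [hm] using hr, rfl⟩
        · rw [hsum_mul]
    _ = _ := by simp only [f_mul, mul_sum]

end QSeries

section PartialTheta

variable {R : Type*} [CommRing R] {q w : R} {L : ℕ}

/-- The moments `∑ₐ q^(na) (q^(a+1); q)_∞ (y q^a; q)_∞`, cut off for `q ^ L = 0`. -/
def thetaMoment (q y : R) (L n : ℕ) : R :=
  ∑ a ∈ range L, q ^ (n * a) * (qPochhammer (q ^ (a + 1)) q L * qPochhammer (y * q ^ a) q L)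

theorem thetaMoment_one_eq_one_sub_mul (hq : q ^ L = 0) (y : R) :
    thetaMoment q y L 1 = 1 - y * thetaMoment q (y * q) L 1 := by
  let P (a : ℕ) : R := qPochhammer (q ^ a) q L * qPochhammer (y * q ^ a) q L
  have telescope : ∑ a ∈ range L, (P (a + 1) - P a) = 1 := by
    rw [sum_range_sub]
    simp [P, hq, qPochhammer_zero_left, qPochhammer_one_left hq]
  rw [eq_sub_iff_add_eq, thetaMoment, thetaMoment, mul_sum, ← sum_add_distrib, ← telescope]
  refine sum_congr rfl fun a _ => ?_
  simp only [P]
  rw [qPochhammer_eq_one_sub_mul hq (q ^ a), qPochhammer_eq_one_sub_mul hq (y * q ^ a),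
    mul_assoc y, mul_assoc y, ← pow_succ, ← pow_succ']
  ring

theorem thetaMoment_one (hq : q ^ L = 0) {y : R} (hy : y ^ L = 0) :
    thetaMoment q y L 1 = ∑ k ∈ range L, (-y) ^ k * q ^ k.choose 2 := by
  have expansion (N : ℕ) : thetaMoment q y L 1 = (∑ k ∈ range N, (-y) ^ k * q ^ k.choose 2) +
      (-y) ^ N * q ^ N.choose 2 * thetaMoment q (y * q ^ N) L 1 := by
    induction N with
    | zero => simp
    | succ N ih =>
      rw [ih, thetaMoment_one_eq_one_sub_mul hq (y * q ^ N), mul_assoc y _ q, ← pow_succ,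
        sum_range_succ, Nat.choose_succ_succ' N 1, Nat.choose_one_right]
      ring
  have h := expansion L
  rwa [neg_pow y L, hy, mul_zero, zero_mul, zero_mul, add_zero] at h

theorem thetaMoment_recurrence (hq : q ^ L = 0) (x : R) (n : ℕ) :
    (q ^ n - 1) * thetaMoment q (x * q) L n + (1 + x) * thetaMoment q (x * q) L (n + 1) -
      x * thetaMoment q (x * q) L (n + 2) = 0 ^ n := by
  let P (a : ℕ) : R := q ^ (n * a) * (qPochhammer (q ^ a) q L * qPochhammer (x * q ^ a) q L)
  have telescope : ∑ a ∈ range L, (P (a + 1) - P a) = 0 ^ n := by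
    rw [sum_range_sub]
    simp [P, mul_comm n, pow_mul, hq, qPochhammer_zero_left, qPochhammer_one_left hq]
  rw [← telescope]
  simp only [thetaMoment, mul_sum]
  rw [← sum_add_distrib, ← sum_sub_distrib]
  refine sum_congr rfl fun a _ => ?_
  simp only [P]
  rw [qPochhammer_eq_one_sub_mul hq (q ^ a), qPochhammer_eq_one_sub_mul hq (x * q ^ a),
    mul_assoc x, mul_assoc x, ← pow_succ, ← pow_succ']
  ring

theorem pow_three_eq_one (hw : 1 + w + w ^ 2 = 0) : w ^ 3 = 1 := by
  linear_combination (w - 1) * hw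

theorem one_add_sq_add_sq_sq_eq_zero (hw : 1 + w + w ^ 2 = 0) :
    1 + w ^ 2 + (w ^ 2) ^ 2 = 0 := by
  linear_combination (1 - w + w ^ 2) * hw

theorem thetaMoment_three (hq : q ^ L = 0) (hw : 1 + w + w ^ 2 = 0) :
    thetaMoment q (w * q) L 3 = 1 + w ^ 2 * q * thetaMoment q (w * q) L 1 := by
  have h0 := thetaMoment_recurrence hq w 0
  have h1 := thetaMoment_recurrence hq w 1
  simp only [pow_zero, sub_self, zero_mul, zero_add, pow_one] at h0 h1
  linear_combination h0 - w ^ 2 * h1 - thetaMoment q (w * q) L 1 * hw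
    + w * thetaMoment q (w * q) L 2 * hw - thetaMoment q (w * q) L 3 * pow_three_eq_one hw

theorem interpolatingSeries_three_eq_thetaMoment (hq : q ^ L = 0) (hw : 1 + w + w ^ 2 = 0) :
    interpolatingSeries 3 q w L = thetaMoment q (w ^ 2 * q) L 3 := by
  have factor (y : R) : (1 - y) * (1 - w ^ 2 * y) * (1 - w * y) = 1 - y ^ 3 := by
    linear_combination (-y + y ^ 2 * w) * hw - y ^ 3 * pow_three_eq_one hw
  refine interpolatingSeries_eq_of_forall_mul hq fun a => ?_
  simp only [qPochhammer, ← prod_mul_distrib]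
  refine prod_congr rfl fun i _ => ?_
  have h := factor (q ^ (a + 1 + i))
  ring_nf at h ⊢
  exact h

theorem interpolatingSeries_three (hq : q ^ L = 0) (hw : 1 + w + w ^ 2 = 0) :
    interpolatingSeries 3 q w L =
      1 + ∑ k ∈ range L, w * (-w ^ 2) ^ k * q ^ (k * (k + 1) / 2 + 1) := by
  have exponent (k : ℕ) : k * (k + 1) / 2 = k + k.choose 2 := by
    have h := Nat.choose_two_right (k + 1)
    rw [Nat.choose_succ_succ' k 1, Nat.choose_one_right, Nat.add_sub_cancel, mul_comm] at h
    exact h.symm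
  rw [interpolatingSeries_three_eq_thetaMoment hq hw,
    thetaMoment_three hq (one_add_sq_add_sq_sq_eq_zero hw),
    thetaMoment_one hq (by rw [mul_pow, hq, mul_zero]), mul_sum]
  congr 1
  refine sum_congr rfl fun k _ => ?_
  rw [exponent, pow_succ, pow_add, ← neg_mul, mul_pow]
  linear_combination (w * (-w ^ 2) ^ k * q ^ k * q ^ k.choose 2 * q) * pow_three_eq_one hw

end PartialTheta

section Counting

/-- The multisets whose elements lie in `F` and in which each `i ∈ F` has multiplicity in `A i`. -/
noncomputable def restrictedMultisets (F : Finset ℕ) (A : ℕ → Finset ℕ) : Finset (Multiset ℕ) :=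
  (F.finsupp A).map Multiset.toFinsupp.symm.toEquiv.toEmbedding

theorem mem_restrictedMultisets {F : Finset ℕ} {A : ℕ → Finset ℕ} {s : Multiset ℕ} :
    s ∈ restrictedMultisets F A ↔ (∀ i ∈ s, i ∈ F) ∧ ∀ i ∈ F, s.count i ∈ A i := by
  rw [restrictedMultisets, mem_map_equiv, mem_finsupp_iff]
  simp [subset_iff]

theorem sum_restrictedMultisets_pow {R : Type*} [CommSemiring R] (q : R) (F : Finset ℕ)
    (A : ℕ → Finset ℕ) :
    ∑ s ∈ restrictedMultisets F A, q ^ s.sum = ∏ i ∈ F, ∑ k ∈ A i, (q ^ i) ^ k := by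
  classical
  rw [restrictedMultisets, sum_map, Finset.finsupp, sum_map, prod_sum]
  refine sum_congr (by congr!) fun g _ => ?_
  have sum_eq : (Finsupp.toMultiset (Finsupp.indicator F g)).sum =
      ∑ i ∈ F.attach, i * g i i.2 := by
    rw [Finsupp.sum_toMultiset, Finsupp.sum_of_support_subset _
      (Finsupp.support_indicator_subset F g) _ (by simp), ← sum_attach]
    simp [mul_comm]
  simp only [← pow_mul, prod_pow_eq_pow_sum, ← sum_eq]
  rfl

theorem sum_card_filter_mul_pow {α R : Type*} [CommSemiring R] {q : R} {L : ℕ} (hq : q ^ L = 0)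
    (S : Finset α) (weight : α → ℕ) :
    ∑ n ∈ range L, (#{x ∈ S | weight x = n} : R) * q ^ n = ∑ x ∈ S, q ^ weight x := by
  simp only [card_filter, Nat.cast_sum, sum_mul]
  rw [sum_comm]
  refine sum_congr rfl fun x _ => ?_
  rcases lt_or_ge (weight x) L with h | h
  · simp [h]
  · simp [h.not_gt, pow_eq_zero_of_le h hq]

theorem count_le_sum (s : Multiset ℕ) {i : ℕ} (hi : 0 < i) : s.count i ≤ s.sum := by
  obtain ⟨t, ht⟩ := exists_add_of_le (Multiset.le_count_iff_replicate_le.1 (le_refl (s.count i)))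
  calc s.count i ≤ s.count i * i := Nat.le_mul_of_pos_right _ hi
    _ ≤ s.count i * i + t.sum := Nat.le_add_right _ _
    _ = s.sum := by
      conv_rhs => rw [ht]
      simp

/-- Here `a` is a distinguished part of the multiset, and `g a` the copies of it that are split
off. -/
theorem card_subtype_exists_eq {S : Finset (Σ _ : ℕ, Multiset ℕ)} {P : ℕ → Multiset ℕ → Prop}
    {g : ℕ → Multiset ℕ} {n : ℕ} (unique : ∀ a b s, P a s → P b s → a = b)
    (le : ∀ a s, P a s → g a ≤ s)
    (mem_iff : ∀ a t, (g a + t).sum = n → (⟨a, t⟩ ∈ S ↔ P a (g a + t))) :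
    Nat.card {s : Multiset ℕ // s.sum = n ∧ ∃ a, P a s} = #{x ∈ S | (g x.1 + x.2).sum = n} := by
  rw [← Set.ncard_coe_finset]
  refine (Set.BijOn.ncard_eq (f := fun x => g x.1 + x.2) ⟨?_, ?_, ?_⟩).symm
  · rintro ⟨a, t⟩ hx
    obtain ⟨hS, hsum⟩ := mem_filter.1 hx
    exact ⟨hsum, a, (mem_iff a t hsum).1 hS⟩
  · rintro ⟨a, t⟩ hx ⟨b, u⟩ hy (heq : g a + t = g b + u)
    obtain ⟨hxS, hx⟩ := mem_filter.1 hx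
    obtain ⟨hyS, hy⟩ := mem_filter.1 hy
    obtain rfl := unique a b _ ((mem_iff a t hx).1 hxS) (heq ▸ (mem_iff b u hy).1 hyS)
    rw [add_left_cancel heq]
  · rintro s ⟨hsum, a, hP⟩
    obtain ⟨t, rfl⟩ := exists_add_of_le (le a s hP)
    exact ⟨⟨a, t⟩, mem_filter.2 ⟨(mem_iff a t hsum).2 hP, hsum⟩, rfl⟩

/-- The partitions with largest part `m * j` that are counted by `Cm m`. -/
def IsCPartition (m j : ℕ) (s : Multiset ℕ) : Prop :=
  (∀ a ∈ s, 0 < a) ∧ m * j ∈ s ∧ (∀ b ∈ s, b ≤ m * j) ∧ ∀ b ∈ s, b ≤ j → s.count b < m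

theorem IsCPartition.unique {m i j : ℕ} {s : Multiset ℕ} (hm : 0 < m) (hi : IsCPartition m i s)
    (hj : IsCPartition m j s) : i = j :=
  Nat.eq_of_mul_eq_mul_left hm ((hj.2.2.1 _ hi.2.1).antisymm (hi.2.2.1 _ hj.2.1))

/-- Pairs `(j, s)` such that adjoining a part `m * j` to `s` gives a partition counted by `Cm m`,
together with the pair `(0, 0)`, which stands for the empty partition. Multiplicities are below `L`,
which is no restriction on partitions of numbers below `L`. -/
noncomputable def cPairs (m L : ℕ) : Finset (Σ _ : ℕ, Multiset ℕ) :=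
  (range L).sigma fun j =>
    restrictedMultisets (Ico 1 (m * j + 1)) fun i => if i ≤ j then range m else range L

theorem mem_cPairs_iff {m j L : ℕ} {t : Multiset ℕ} (hm : 1 < m) (hpos : 0 < m * j + t.sum)
    (hL : m * j + t.sum < L) : ⟨j, t⟩ ∈ cPairs m L ↔ IsCPartition m j ({m * j} + t) := by
  have hj_le : j ≤ m * j := Nat.le_mul_of_pos_left j (by omega)
  simp only [cPairs, mem_sigma, mem_range, mem_restrictedMultisets, mem_Ico, IsCPartition,
    Multiset.singleton_add, Multiset.mem_cons, Multiset.count_cons]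
  constructor
  · rintro ⟨-, ht, hcount⟩
    have hj : 0 < j := by
      by_contra! hj
      obtain rfl : j = 0 := by omega
      have : t = 0 := Multiset.eq_zero_of_forall_notMem fun b hb => by
        have := ht b hb
        omega
      simp [this] at hpos
    have hlt : j < m * j := by nlinarith
    refine ⟨?_, ?_, ?_, fun b hb hbj => ?_⟩
    · grind
    · grind
    · grind
    · have := hcount b (by grind)
      rw [if_pos hbj, mem_range] at this
      grind
  · rintro ⟨hp, -, hle, hcount⟩
    refine ⟨by omega, by grind, fun i hi => ?_⟩
    have := count_le_sum t hi.1
    have hnot : i ∉ t → t.count i = 0 := Multiset.count_eq_zero_of_notMem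
    split_ifs <;> grind

theorem Cm_eq_card_cPairs {m n L : ℕ} (hm : 1 < m) (hn : n < L) :
    Cm m n = #{x ∈ cPairs m L | m * x.1 + x.2.sum = n} := by
  rcases Nat.eq_zero_or_pos n with rfl | hpos
  · have filter_eq : {x ∈ cPairs m L | m * x.1 + x.2.sum = 0} = {⟨0, 0⟩} := by
      refine eq_singleton_iff_unique_mem.2 ⟨?_, fun ⟨j, t⟩ hx => ?_⟩
      · simp [cPairs, mem_restrictedMultisets, hn]
      · obtain ⟨hmem, hsum⟩ := mem_filter.1 hx
        obtain rfl : j = 0 := by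
          have hmj : m * j = 0 := (Nat.add_eq_zero_iff.1 hsum).1
          exact (mul_eq_zero.1 hmj).resolve_left (by omega)
        have parts := (mem_restrictedMultisets.1 (mem_sigma.1 hmem).2).1
        obtain rfl : t = 0 := Multiset.eq_zero_of_forall_notMem fun b hb => by
          simpa using parts b hb
        rfl
    rw [filter_eq, card_singleton, Cm, if_pos rfl]
  · have hcard := card_subtype_exists_eq (S := cPairs m L) (n := n) (P := IsCPartition m)
      (g := fun j => {m * j}) (fun _ _ _ => IsCPartition.unique (by omega))
      (fun j s hs => Multiset.singleton_le.2 hs.2.1) fun j t hsum => by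
        rw [Multiset.sum_add, Multiset.sum_singleton] at hsum
        exact mem_cPairs_iff hm (hsum ▸ hpos) (hsum ▸ hn)
    simp only [Multiset.sum_add, Multiset.sum_singleton] at hcard
    rw [← hcard, Cm, if_neg hpos.ne']
    simp only [IsCPartition, exists_and_left]

/-- The partitions with smallest part `a` that are counted by `Dm m`. -/
def IsDPartition (m a : ℕ) (s : Multiset ℕ) : Prop :=
  a ∈ s ∧ s.count a = m ∧ (∀ b ∈ s, a ≤ b) ∧ ∀ b ∈ s, b ≠ a → s.count b < m

theorem IsDPartition.unique {m a b : ℕ} {s : Multiset ℕ} (ha : IsDPartition m a s)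
    (hb : IsDPartition m b s) : a = b :=
  (ha.2.2.1 _ hb.1).antisymm (hb.2.2.1 _ ha.1)

/-- Pairs `(a, s)` such that adjoining `m` copies of the part `a` to `s` gives a partition counted
by `Dm m`. The bound on the parts is no restriction on partitions of numbers below `L`. -/
noncomputable def dPairs (m L : ℕ) : Finset (Σ _ : ℕ, Multiset ℕ) :=
  (range L).sigma fun a => restrictedMultisets (Ico (a + 1) (a + 1 + L)) fun _ => range m

theorem mem_dPairs_iff {m a L : ℕ} {t : Multiset ℕ} (hm : 0 < m) (hL : m * a + t.sum < L) :
    ⟨a, t⟩ ∈ dPairs m L ↔ IsDPartition m a (Multiset.replicate m a + t) := by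
  have ha : a ≤ m * a := Nat.le_mul_of_pos_left a hm
  have ht (b) (hb : b ∈ t) : b ≤ t.sum := Multiset.le_sum_of_mem hb
  have hnot (b) : b ∉ t → t.count b = 0 := Multiset.count_eq_zero_of_notMem
  have hmem : a ∈ t ↔ 0 < t.count a := Multiset.count_pos.symm
  simp only [dPairs, mem_sigma, mem_range, mem_restrictedMultisets, mem_Ico, IsDPartition,
    Multiset.mem_add, Multiset.mem_replicate, Multiset.count_add, Multiset.count_replicate]
  constructor
  · rintro ⟨-, hlt, hcount⟩
    refine ⟨by grind, by grind, by grind, by grind⟩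
  · rintro ⟨-, hcount, hle, hlt⟩
    refine ⟨by grind, by grind, by grind⟩

theorem Dm_eq_card_dPairs {m n L : ℕ} (hm : 0 < m) (hn : n < L) :
    Dm m n = #{x ∈ dPairs m L | m * x.1 + x.2.sum = n} := by
  have hcard := card_subtype_exists_eq (S := dPairs m L) (n := n) (P := IsDPartition m)
    (g := fun a => Multiset.replicate m a) (fun _ _ _ => IsDPartition.unique)
    (fun a s hs => Multiset.le_count_iff_replicate_le.1 hs.2.1.ge) fun a t hsum => by
      rw [Multiset.sum_add, Multiset.sum_replicate, smul_eq_mul] at hsum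
      exact mem_dPairs_iff hm (hsum ▸ hn)
  simp only [Multiset.sum_add, Multiset.sum_replicate, smul_eq_mul] at hcard
  exact hcard

end Counting

section GeneratingFunctions

variable {R : Type*} [CommRing R] {q w : R} {L : ℕ}

theorem sum_Dm_mul_pow (hq : q ^ L = 0) {m : ℕ} (hm : 0 < m) :
    ∑ n ∈ range L, (Dm m n : R) * q ^ n = interpolatingSeries m q 1 L := by
  calc ∑ n ∈ range L, (Dm m n : R) * q ^ n
      = ∑ x ∈ dPairs m L, q ^ (m * x.1 + x.2.sum) := by
        rw [← sum_card_filter_mul_pow hq]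
        exact sum_congr rfl fun n hn => by rw [Dm_eq_card_dPairs hm (mem_range.1 hn)]
    _ = ∑ a ∈ range L, q ^ (m * a) *
          ∏ i ∈ Ico (a + 1) (a + 1 + L), ∑ k ∈ range m, (q ^ i) ^ k := by
        simp only [dPairs, sum_sigma, pow_add q (m * _) _, ← mul_sum, sum_restrictedMultisets_pow]
    _ = interpolatingSeries m q 1 L := by
        simp only [interpolatingSeries_one hq, prod_Ico_eq_prod_range, Nat.add_sub_cancel_left]

theorem prod_geom_sum_eq_qPochhammer_mul_invQFactorial (hq : q ^ L = 0) {m : ℕ} (hm : 0 < m)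
    (j : ℕ) :
    ∏ i ∈ Ico 1 (m * j + 1), ∑ k ∈ (if i ≤ j then range m else range L), (q ^ i) ^ k =
      qPochhammer (q ^ m) (q ^ m) j * invQFactorial q L (m * j) := by
  have hj : j ≤ m * j := Nat.le_mul_of_pos_left j hm
  rw [prod_Ico_eq_prod_range, Nat.add_sub_cancel, invQFactorial,
    ← prod_range_mul_prod_Ico _ hj, ← prod_range_mul_prod_Ico _ hj, ← mul_assoc, qPochhammer,
    ← prod_mul_distrib]
  congr 1
  · refine prod_congr rfl fun i hi => ?_
    have hgeom := one_sub_pow_mul_geom_sum hq i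
    have hfin := mul_neg_geom_sum (q ^ (i + 1)) m
    rw [if_pos (by have := mem_range.1 hi; omega), add_comm 1 i, ← pow_succ', pow_right_comm,
      ← hfin]
    linear_combination (-∑ k ∈ range m, (q ^ (i + 1)) ^ k) * hgeom
  · refine prod_congr rfl fun i hi => ?_
    rw [if_neg (by have := (mem_Ico.1 hi).1; omega), add_comm 1 i]

theorem sum_Cm_mul_pow (hq : q ^ L = 0) {m : ℕ} (hm : 1 < m) :
    ∑ n ∈ range L, (Cm m n : R) * q ^ n =
      ∑ j ∈ range L, q ^ (m * j) *
        (qPochhammer (q ^ m) (q ^ m) j * invQFactorial q L (m * j)) := by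
  calc ∑ n ∈ range L, (Cm m n : R) * q ^ n
      = ∑ x ∈ cPairs m L, q ^ (m * x.1 + x.2.sum) := by
        rw [← sum_card_filter_mul_pow hq]
        exact sum_congr rfl fun n hn => by rw [Cm_eq_card_cPairs hm (mem_range.1 hn)]
    _ = _ := by
        simp only [cPairs, sum_sigma, pow_add q (m * _) _, ← mul_sum,
          sum_restrictedMultisets_pow,
          prod_geom_sum_eq_qPochhammer_mul_invQFactorial hq (zero_lt_one.trans hm)]

/-- The coefficient of `q ^ (k (k + 1) / 2 + 1)` in `3 ∑ C₃(n) qⁿ - ∑ D₃(n) qⁿ`. -/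
def triangularCoeff (k : ℕ) : ℤ :=
  (-1) ^ k * if k % 3 = 1 then 2 else -1

theorem triangularCoeff_eq (hw : 1 + w + w ^ 2 = 0) (k : ℕ) :
    (triangularCoeff k : R) = w * (-w ^ 2) ^ k + w ^ 2 * (-w) ^ k := by
  have hw3 := pow_three_eq_one hw
  rw [neg_pow (w ^ 2), neg_pow w, pow_right_comm, pow_eq_pow_mod k hw3, triangularCoeff]
  have hk : k % 3 = 0 ∨ k % 3 = 1 ∨ k % 3 = 2 := by omega
  rcases hk with hk | hk | hk <;> rw [hk] <;> push_cast
  · linear_combination -(-1) ^ k * hw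
  · linear_combination -2 * (-1) ^ k * hw3
  · linear_combination -(-1) ^ k * (hw + (w ^ 2 + w) * hw3)

theorem sum_pow_eq_zero_of_not_three_dvd (hw : 1 + w + w ^ 2 = 0) {r : ℕ} (hr : ¬ 3 ∣ r) :
    ∑ t ∈ range 3, (w ^ t) ^ r = 0 := by
  have hw3 := pow_three_eq_one hw
  simp only [sum_range_succ, sum_range_zero, pow_right_comm w _ r, pow_eq_pow_mod r hw3]
  have hr' : r % 3 = 1 ∨ r % 3 = 2 := by omega
  rcases hr' with hr' | hr' <;> rw [hr']
  · linear_combination hw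
  · linear_combination hw + w * hw3

theorem three_mul_sum_Cm_mul_pow (hq : q ^ L = 0) (hw : 1 + w + w ^ 2 = 0) :
    3 * ∑ n ∈ range L, (Cm 3 n : R) * q ^ n = ∑ n ∈ range L, (Dm 3 n : R) * q ^ n + 2 +
      ∑ k ∈ range L, (triangularCoeff k : R) * q ^ (k * (k + 1) / 2 + 1) := by
  have hw3 := pow_three_eq_one hw
  have hw4 : (w ^ 2) ^ 2 = w := by linear_combination w * hw3
  have average : ∑ t ∈ range 3, interpolatingSeries 3 q (w ^ t) L =
      3 * ∑ n ∈ range L, (Cm 3 n : R) * q ^ n := by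
    rw [sum_interpolatingSeries_pow hq three_pos hw3 fun r => sum_pow_eq_zero_of_not_three_dvd hw,
      sum_Cm_mul_pow hq (by norm_num), Nat.cast_ofNat]
  rw [← average, sum_Dm_mul_pow hq three_pos]
  simp only [sum_range_succ _ 2, sum_range_succ _ 1, sum_range_one, pow_zero, pow_one,
    interpolatingSeries_three hq hw,
    interpolatingSeries_three hq (one_add_sq_add_sq_sq_eq_zero hw), hw4,
    triangularCoeff_eq hw, add_mul, sum_add_distrib]
  ring

end GeneratingFunctions

section Coefficients

open Polynomial

variable {K : Type*} [CommRing K] {L : ℕ}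

theorem mk_X_pow_eq_zero : AdjoinRoot.mk (X ^ L : K[X]) X ^ L = 0 := by
  rw [← map_pow, AdjoinRoot.mk_self]

theorem coeff_eq_of_mk_X_pow_eq {p₁ p₂ : K[X]} {n : ℕ} (hn : n < L)
    (h : AdjoinRoot.mk (X ^ L) p₁ = AdjoinRoot.mk (X ^ L) p₂) : p₁.coeff n = p₂.coeff n := by
  rw [AdjoinRoot.mk_eq_mk, X_pow_dvd_iff] at h
  exact sub_eq_zero.1 (coeff_sub p₁ p₂ n ▸ h n hn)

theorem three_C3_eq_D3_general (n : ℕ) (hn : 0 < n) :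
    3 * (Cm 3 n : ℤ) = Dm 3 n + ∑ k ∈ range (n + 1) with n = k * (k + 1) / 2 + 1,
      triangularCoeff k := by
  obtain ⟨w, hw⟩ : ∃ w : ℂ, 1 + w + w ^ 2 = 0 :=
    ⟨_, by simpa [sum_range_succ] using
      (Complex.isPrimitiveRoot_exp 3 (by norm_num)).geom_sum_eq_zero (by norm_num)⟩
  let φ := AdjoinRoot.mk (X ^ (n + 1) : ℂ[X])
  have hw' : 1 + φ (C w) + φ (C w) ^ 2 = 0 := by
    simpa only [map_add, map_one, map_pow, map_zero] using congrArg (fun z => φ (C z)) hw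
  have coeff_eq := coeff_eq_of_mk_X_pow_eq (K := ℂ) (lt_add_one n)
    (p₁ := (3 : ℕ) * ∑ i ∈ range (n + 1), (Cm 3 i : ℂ[X]) * X ^ i)
    (p₂ := ∑ i ∈ range (n + 1), (Dm 3 i : ℂ[X]) * X ^ i + (2 : ℕ) +
      ∑ k ∈ range (n + 1), (triangularCoeff k : ℂ[X]) * X ^ (k * (k + 1) / 2 + 1))
    (by simpa only [map_add, map_mul, map_sum, map_pow, map_natCast, map_intCast, Nat.cast_ofNat,
      map_ofNat] using three_mul_sum_Cm_mul_pow mk_X_pow_eq_zero hw')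
  simp only [coeff_add, finsetSum_coeff, coeff_natCast_mul, coeff_intCast_mul, coeff_X_pow,
    coeff_natCast_ite, if_neg hn.ne', mul_ite, mul_one, mul_zero, sum_ite_eq, self_mem_range_succ,
    if_true, ← sum_filter] at coeff_eq
  exact_mod_cast coeff_eq

end Coefficients

/-- Theorem 1.6: if `n ≥ 1` is not a triangular number plus one, then `3·C₃(n) = D₃(n)`. -/
theorem three_C3_eq_D3 (n : ℕ) (hn : 0 < n)
    (h : ¬ ∃ k : ℕ, n = k * (k + 1) / 2 + 1) :
    3 * Cm 3 n = Dm 3 n := by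
  have no_correction : {k ∈ range (n + 1) | n = k * (k + 1) / 2 + 1} = ∅ :=
    filter_eq_empty_iff.2 fun k _ hk => h ⟨k, hk⟩
  have general := three_C3_eq_D3_general n hn
  rw [no_correction, sum_empty, add_zero] at general
  exact_mod_cast general
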